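/- arXiv:2006.01887 — 2 statements merged into one kernel-verified Lean document; each statement's English description precedes it below -/
import Mathlib

section
/- Let s₀ < s₁ < ⋯ < s_J be real numbers (J ≥ 1), let γ₀ : (s₀, s_J] → [0,∞) be non-increasing, and let g : [s₀, s_J) → ℝ be bounded and measurable with ∫_{s₀}^{s_J} |g(r)| γ₀(r) dr < ∞. Assume that g ≤ 0 on [s_{j−1}, s_j) for every odd index j, that g ≥ 0 on [s_{j−1}, s_j) for every even index j, and that ∫_{s₀}^{s_j} g(r) dr ≤ 0 for every j = 1, …, J. Then ∫_{s₀}^{s_j} g(r) γ₀(r) dr ≤ 0 for every j = 1, …, J. -/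
/-! The Abel-summation argument. Write `G j` and `W j` for the integrals of `g` and `g * γ₀` over
`[s 0, s j]`. On an odd interval `g ≤ 0`, so the weight may be replaced by its value at the right
endpoint; on an even one `g ≥ 0`, so it may be replaced by its value at the left endpoint, which
lies in the domain of `γ₀` because the first interval is odd. Either way the integral of `g * γ₀`
over that interval is at most a constant times the increment of `G`. Since `G ≤ 0` and `γ₀` is
non-increasing, these bounds combine by induction into `W j ≤ γ₀ (s j) * G j`, and the right-hand
side is nonpositive. -/

open MeasureTheory Set

/-- Key real-analytic step (Step 1.1) in the positive maximum principle:
if `g` alternates sign on the subintervals `[s_{j-1}, s_j)` (non-positive on odd-indexed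
intervals, nonnegative on even-indexed ones), all partial integrals `∫_{s₀}^{s_j} g ≤ 0`,
and `γ₀` is a nonnegative non-increasing weight on `(s₀, s_J]`, then all weighted partial
integrals `∫_{s₀}^{s_j} g γ₀ ≤ 0`. -/
theorem weighted_partial_integrals_nonpos
    (J : ℕ) (hJ : 1 ≤ J) (s : ℕ → ℝ) (hs : ∀ j : ℕ, j < J → s j < s (j + 1))
    (γ₀ : ℝ → ℝ) (hγ₀nonneg : ∀ r ∈ Ioc (s 0) (s J), 0 ≤ γ₀ r)
    (hγ₀anti : AntitoneOn γ₀ (Ioc (s 0) (s J)))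
    (g : ℝ → ℝ) (hgmeas : Measurable g)
    (hgbdd : ∃ C : ℝ, ∀ r ∈ Ico (s 0) (s J), |g r| ≤ C)
    (hint : IntegrableOn (fun r : ℝ => g r * γ₀ r) (Ioc (s 0) (s J)) volume)
    (hsign : ∀ j : ℕ, 1 ≤ j → j ≤ J →
      (Odd j → ∀ r ∈ Ico (s (j - 1)) (s j), g r ≤ 0) ∧
      (Even j → ∀ r ∈ Ico (s (j - 1)) (s j), 0 ≤ g r))
    (hpartial : ∀ j : ℕ, 1 ≤ j → j ≤ J → (∫ r in (s 0)..(s j), g r) ≤ 0) :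
    ∀ j : ℕ, 1 ≤ j → j ≤ J → (∫ r in (s 0)..(s j), g r * γ₀ r) ≤ 0 := by
  obtain ⟨C, hC⟩ := hgbdd
  have hmono : ∀ k, k ≤ J → ∀ j, j ≤ k → s j ≤ s k := by
    intro k hk j hjk
    induction k, hjk using Nat.le_induction with
    | base => exact le_rfl
    | succ n hn ih => exact (ih (by omega)).trans (hs n (by omega)).le
  have hmem : ∀ j, 1 ≤ j → j ≤ J → s j ∈ Ioc (s 0) (s J) := fun j h1 hj =>
    ⟨(hs 0 (by omega)).trans_le (hmono j hj 1 h1), hmono J le_rfl j hj⟩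
  have hgint : ∀ i j, i ≤ j → j ≤ J → IntervalIntegrable g volume (s i) (s j) := by
    intro i j hij hj
    rw [intervalIntegrable_iff_integrableOn_Ico_of_le (hmono j hj i hij)]
    refine Measure.integrableOn_of_bounded (M := C) (by simp) hgmeas.aestronglyMeasurable ?_
    filter_upwards [ae_restrict_mem measurableSet_Ico] with r hr
    exact hC r ⟨(hmono i (by omega) 0 (by omega)).trans hr.1, hr.2.trans_le (hmono J le_rfl j hj)⟩
  have hwint : ∀ i j, i ≤ j → j ≤ J →
      IntervalIntegrable (fun r => g r * γ₀ r) volume (s i) (s j) := by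
    intro i j hij hj
    rw [intervalIntegrable_iff_integrableOn_Ioc_of_le (hmono j hj i hij)]
    exact hint.mono_set (Ioc_subset_Ioc (hmono i (by omega) 0 (by omega)) (hmono J le_rfl j hj))
  have hstep : ∀ j, j < J → ∀ c : ℝ,
      (∀ r ∈ Ioo (s j) (s (j + 1)), g r * γ₀ r ≤ c * g r) →
      (∫ r in (s j)..(s (j + 1)), g r * γ₀ r) ≤ c * ∫ r in (s j)..(s (j + 1)), g r := by
    intro j hj c h
    rw [← intervalIntegral.integral_const_mul]
    exact intervalIntegral.integral_mono_on_of_le_Ioo (hs j hj).le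
      (hwint j (j + 1) (by omega) hj) ((hgint j (j + 1) (by omega) hj).const_mul c) h
  have hIoo : ∀ j, j < J → ∀ r ∈ Ioo (s j) (s (j + 1)), r ∈ Ioc (s 0) (s J) := fun j hj r hr =>
    ⟨(hmono j hj.le 0 (by omega)).trans_lt hr.1, hr.2.le.trans (hmono J le_rfl (j + 1) hj)⟩
  have hodd : ∀ j, j < J → Odd (j + 1) →
      (∫ r in (s j)..(s (j + 1)), g r * γ₀ r) ≤
        γ₀ (s (j + 1)) * ∫ r in (s j)..(s (j + 1)), g r := by
    intro j hj ho
    refine hstep j hj _ fun r hr => ?_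
    have hg := (hsign (j + 1) (by omega) hj).1 ho r ⟨hr.1.le, hr.2⟩
    have hγ := hγ₀anti (hIoo j hj r hr) (hmem (j + 1) (by omega) hj) hr.2.le
    nlinarith
  have heven : ∀ j, 1 ≤ j → j < J → Even (j + 1) →
      (∫ r in (s j)..(s (j + 1)), g r * γ₀ r) ≤
        γ₀ (s j) * ∫ r in (s j)..(s (j + 1)), g r := by
    intro j h1 hj he
    refine hstep j hj _ fun r hr => ?_
    have hg := (hsign (j + 1) (by omega) hj).2 he r ⟨hr.1.le, hr.2⟩
    have hγ := hγ₀anti (hmem j h1 hj.le) (hIoo j hj r hr) hr.1.le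
    nlinarith
  have key : ∀ j, 1 ≤ j → j ≤ J →
      (∫ r in (s 0)..(s j), g r * γ₀ r) ≤ γ₀ (s j) * ∫ r in (s 0)..(s j), g r := by
    intro j h1
    induction j, h1 using Nat.le_induction with
    | base => exact fun hj => hodd 0 hj (by decide)
    | succ j h1 ih =>
      intro hj
      have hW := intervalIntegral.integral_add_adjacent_intervals
        (hwint 0 j (by omega) (by omega)) (hwint j (j + 1) (by omega) hj)
      have hG := intervalIntegral.integral_add_adjacent_intervals
        (hgint 0 j (by omega) (by omega)) (hgint j (j + 1) (by omega) hj)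
      have hγ := hγ₀anti (hmem j h1 (by omega)) (hmem (j + 1) (by omega) hj) (hs j hj).le
      have ih := ih (by omega)
      rcases Nat.even_or_odd (j + 1) with he | ho
      · have h := heven j h1 hj he
        have hp := hpartial (j + 1) (by omega) hj
        rw [← hW]
        rw [← hG] at hp ⊢
        nlinarith
      · have h := hodd j hj ho
        have hp := hpartial j h1 (by omega)
        rw [← hW, ← hG]
        nlinarith
  exact fun j h1 hj => (key j h1 hj).trans
    (mul_nonpos_of_nonneg_of_nonpos (hγ₀nonneg _ (hmem j h1 hj)) (hpartial j h1 hj))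
end

section
/- Let f : [0,∞) → ℝ be continuous and right-differentiable at every point of [0,∞), and suppose that its right derivative f'_+ is càdlàg and bounded on [0,∞). Then f is globally Lipschitz continuous (with Lipschitz constant ‖f'_+‖_∞), and f(t) − f(0) = ∫_0^t f'_+(s) ds for all t ≥ 0. -/
/-!
The difference-quotient hypothesis says that `f` has derivative `g t` within `[t, ∞)` for every
`t ≥ 0`. The Lipschitz bound is then the mean value inequality for right derivatives
(`norm_image_sub_le_of_norm_deriv_right_le_segment`), and the integral formula is the fundamental
theorem of calculus for right derivatives
(`intervalIntegral.integral_eq_sub_of_hasDeriv_right_of_le`).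
The latter needs `g` integrable on `[0, t]`: it is bounded, and it is measurable because it agrees
there with `x ↦ derivWithin f (Ici x) x`, which is measurable for every `f`
(`measurable_derivWithin_Ici`).
-/

open MeasureTheory Set Filter Topology

/-- A function on `[0,∞)` is càdlàg: right-continuous at every `t ≥ 0` and with finite
left limits at every `t > 0`. -/
def CadlagOn (f : ℝ → ℝ) : Prop :=
  (∀ t : ℝ, 0 ≤ t → Tendsto f (nhdsWithin t (Ici t)) (nhds (f t))) ∧
  (∀ t : ℝ, 0 < t → ∃ L : ℝ, Tendsto f (nhdsWithin t (Iio t)) (nhds L))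

/-- Convergence of the difference quotients `(f (t + h) - f t) / h` as `h → 0+`, as a derivative
within `[t, ∞)`. -/
theorem hasDerivWithinAt_Ici_of_tendsto_quotient {f : ℝ → ℝ} {t c : ℝ}
    (h : Tendsto (fun h : ℝ => (f (t + h) - f t) / h) (𝓝[>] 0) (𝓝 c)) :
    HasDerivWithinAt f c (Ici t) t := by
  rw [← hasDerivWithinAt_Ioi_iff_Ici, hasDerivWithinAt_iff_tendsto_slope' self_notMem_Ioi]
  have hshift : Tendsto (fun y : ℝ => y - t) (𝓝[>] t) (𝓝[>] 0) := by
    refine tendsto_nhdsWithin_iff.2 ⟨?_, ?_⟩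
    · have hc : Tendsto (fun y : ℝ => y - t) (𝓝 t) (𝓝 (t - t)) :=
        (continuous_id.sub continuous_const).tendsto t
      rw [sub_self] at hc
      exact hc.mono_left nhdsWithin_le_nhds
    · filter_upwards [self_mem_nhdsWithin] with y hy
      exact sub_pos.2 (mem_Ioi.1 hy)
  refine (h.comp hshift).congr fun y => ?_
  simp [slope_def_field]

/-- If `f : [0,∞) → ℝ` is continuous and right-differentiable everywhere with a càdlàg
bounded right derivative `g`, then `f` is globally Lipschitz (with constant any bound of
`|g|`, in particular `‖f'_+‖_∞`), and `f(t) - f(0) = ∫_0^t g(s) ds` for all `t ≥ 0`. -/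
theorem lipschitz_and_ftc_of_cadlag_right_deriv
    (f g : ℝ → ℝ) (hf : ContinuousOn f (Ici 0))
    (hderiv : ∀ t : ℝ, 0 ≤ t →
      Tendsto (fun h : ℝ => (f (t + h) - f t) / h) (𝓝[>] 0) (𝓝 (g t)))
    (hg : CadlagOn g) (C : ℝ) (hC : ∀ t : ℝ, 0 ≤ t → |g t| ≤ C) :
    (∀ a ∈ Ici (0 : ℝ), ∀ b ∈ Ici (0 : ℝ), |f b - f a| ≤ C * |b - a|) ∧
    (∀ t : ℝ, 0 ≤ t → f t - f 0 = ∫ s in (0:ℝ)..t, g s) := by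
  have hd : ∀ t : ℝ, 0 ≤ t → HasDerivWithinAt f (g t) (Ici t) t := fun t ht =>
    hasDerivWithinAt_Ici_of_tendsto_quotient (hderiv t ht)
  have hlip : ∀ a b : ℝ, 0 ≤ a → a ≤ b → |f b - f a| ≤ C * (b - a) := fun a b ha hab =>
    norm_image_sub_le_of_norm_deriv_right_le_segment
      (hf.mono fun x hx => ha.trans hx.1) (fun x hx => hd x (ha.trans hx.1))
      (fun x hx => hC x (ha.trans hx.1)) b ⟨hab, le_rfl⟩
  refine ⟨fun a ha b hb => ?_, fun t ht => ?_⟩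
  · rcases le_total a b with hab | hba
    · rw [abs_of_nonneg (sub_nonneg.2 hab)]
      exact hlip a b ha hab
    · rw [abs_sub_comm, abs_sub_comm b a, abs_of_nonneg (sub_nonneg.2 hba)]
      exact hlip b a hb hba
  · have hmeas : AEStronglyMeasurable g (volume.restrict (Ioc 0 t)) := by
      refine (measurable_derivWithin_Ici f).aestronglyMeasurable.congr ?_
      filter_upwards [ae_restrict_mem measurableSet_Ioc] with x hx
      exact (hd x hx.1.le).derivWithin (uniqueDiffOn_Ici x x self_mem_Ici)
    have hint : IntervalIntegrable g volume 0 t := by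
      rw [intervalIntegrable_iff_integrableOn_Ioc_of_le ht]
      refine IntegrableOn.of_bound measure_Ioc_lt_top hmeas C ?_
      filter_upwards [ae_restrict_mem measurableSet_Ioc] with x hx
      exact hC x hx.1.le
    refine (intervalIntegral.integral_eq_sub_of_hasDeriv_right_of_le ht
      (hf.mono fun x hx => hx.1) (fun x hx => ?_) hint).symm
    exact (hd x hx.1.le).mono Ioi_subset_Ici_self
end
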